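/- There exists a sequence s : ℕ → ℚ such that s is computable (Computable s, using the Primcodable structure on ℚ), s is strictly increasing, 0 ≤ s n ≤ 1 for all n, and the supremum L = ⨆ n, ((s n : ℝ)) is not a computable real number in the following sense: for every computable sequence q : ℕ → ℚ it is not the case that |(q n : ℝ) - L| ≤ 2^(-(n : ℤ)) for all n. -/

import Mathlib

open Encodable Finset

/-! ### Computability over the rationals -/

/-- The code of a rational number as the pair of its reduced numerator and denominator. -/
def ratCode (q : ℚ) : ℕ := Nat.pair (encode q.num) q.den

/-- A decidable description of the codes of rational numbers, see `mem_range_ratCode`. -/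
def IsRatCode (x : ℕ) : Prop :=
  x.unpair.2 ≠ 0 ∧ ((x.unpair.1 + 1) / 2).Coprime x.unpair.2

instance : DecidablePred IsRatCode := fun _ => inferInstanceAs (Decidable (_ ∧ _))

theorem encode_intCast (n : ℕ) : encode (n : ℤ) = 2 * n := rfl

theorem encode_intNegSucc (n : ℕ) : encode (Int.negSucc n) = 2 * n + 1 := rfl

theorem natAbs_eq_encode (z : ℤ) : z.natAbs = (encode z + 1) / 2 := by
  rcases z with n | n
  · rw [Int.ofNat_eq_natCast, encode_intCast, Int.natAbs_natCast]; omega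
  · rw [encode_intNegSucc, Int.natAbs_negSucc]; omega

theorem toNat_eq_encode (z : ℤ) :
    z.toNat = if encode z % 2 = 0 then encode z / 2 else 0 := by
  rcases z with n | n
  · rw [Int.ofNat_eq_natCast, encode_intCast, Int.toNat_natCast]; grind
  · rw [encode_intNegSucc, Int.toNat_negSucc]; grind

theorem mem_range_ratCode {x : ℕ} : x ∈ Set.range ratCode ↔ IsRatCode x := by
  constructor
  · rintro ⟨q, rfl⟩
    simp only [IsRatCode, ratCode, Nat.unpair_pair, ← natAbs_eq_encode]
    exact ⟨q.den_nz, q.reduced⟩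
  · rintro ⟨h0, hc⟩
    refine ⟨⟨Denumerable.ofNat ℤ x.unpair.1, x.unpair.2, h0, ?_⟩, ?_⟩
    · rwa [natAbs_eq_encode, Denumerable.encode_ofNat]
    · change Nat.pair (encode (Denumerable.ofNat ℤ x.unpair.1)) x.unpair.2 = x
      rw [Denumerable.encode_ofNat, Nat.pair_unpair]

theorem isRatCode_ratCode (q : ℚ) : IsRatCode (ratCode q) := mem_range_ratCode.1 ⟨q, rfl⟩

/-- The encoding of a rational number underlying `Primcodable ℚ`; it differs from the one given by
`Rat.instEncodable`. -/
def ratIndex (q : ℚ) : ℕ := @encode ℚ Rat.instDenumerable.toEncodable q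

theorem ratIndex_eq_count (q : ℚ) : ratIndex q = Nat.count IsRatCode (ratCode q) := by
  have h : ratIndex q =
      @List.countP _ (fun x => @decide (x ∈ Set.range ratCode) (decidableRangeEncode ℚ x))
        (List.range (ratCode q)) := rfl
  rw [h, Nat.count]
  congr! 2 with x
  exact decide_eq_decide.2 mem_range_ratCode

theorem primrecPred_isRatCode : PrimrecPred IsRatCode := by
  have hR : PrimrecRel fun k y : ℕ =>
      ¬ (y.unpair.1 % k = 0 ∧ y.unpair.2 % k = 0) ∨ k = 1 := by
    have hmod {f : ℕ → ℕ} (hf : Primrec f) : PrimrecRel fun k y : ℕ => f y % k = 0 :=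
      Primrec.eq.comp (Primrec.nat_mod.comp (hf.comp Primrec.snd) Primrec.fst) (Primrec.const 0)
    exact (((hmod (Primrec.fst.comp Primrec.unpair)).and
      (hmod (Primrec.snd.comp Primrec.unpair))).not).or
      (Primrec.eq.comp Primrec.fst (Primrec.const 1))
  have h1 : Primrec fun x : ℕ => x.unpair.1 := Primrec.fst.comp Primrec.unpair
  have h2 : Primrec fun x : ℕ => x.unpair.2 := Primrec.snd.comp Primrec.unpair
  have h3 : Primrec fun x : ℕ => Nat.pair ((x.unpair.1 + 1) / 2) x.unpair.2 :=
    Primrec₂.natPair.comp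
      (Primrec.nat_div.comp (Primrec.succ.comp h1) (Primrec.const 2)) h2
  refine ((Primrec.eq.comp h2 (Primrec.const 0)).not.and
    (hR.forall_lt.comp (Primrec.succ.comp h2) h3)).of_eq fun x => ?_
  simp only [IsRatCode, Nat.unpair_pair]
  refine and_congr_right fun h0 => ⟨fun h => ?_, fun h k _ => ?_⟩
  · refine (h (Nat.gcd ((x.unpair.1 + 1) / 2) x.unpair.2) ?_).resolve_left ?_
    · exact Nat.lt_succ_of_le (Nat.gcd_le_right _ (Nat.pos_of_ne_zero h0))
    · exact not_not.2 ⟨Nat.mod_eq_zero_of_dvd (Nat.gcd_dvd_left _ _),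
        Nat.mod_eq_zero_of_dvd (Nat.gcd_dvd_right _ _)⟩
  · by_contra! hk
    exact hk.2 (Nat.eq_one_of_dvd_coprimes h (Nat.dvd_of_mod_eq_zero hk.1.1)
      (Nat.dvd_of_mod_eq_zero hk.1.2))

theorem PrimrecPred.nat_count {p : ℕ → Prop} [DecidablePred p] (hp : PrimrecPred p) :
    Primrec (Nat.count p) :=
  (Primrec.list_length.comp ((Primrec.listFilter hp).comp Primrec.list_range)).of_eq
    fun n => by rw [Nat.count, List.countP_eq_length_filter]

theorem computable_ratCode : Computable ratCode := by
  have hcount := primrecPred_isRatCode.nat_count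
  have hp : Primrec fun p : ℚ × ℕ =>
      decide (IsRatCode p.2 ∧ Nat.count IsRatCode p.2 = ratIndex p.1) :=
    ((primrecPred_isRatCode.comp Primrec.snd).and (Primrec.eq.comp (hcount.comp Primrec.snd)
      ((@Primrec.encode ℚ _).comp Primrec.fst))).decide
  refine (Partrec.rfind hp.to_comp.to₂.partrec₂).of_eq_tot fun q => ?_
  obtain ⟨x, hx, -⟩ := Nat.rfind_min'
    (p := fun x => decide (IsRatCode x ∧ Nat.count IsRatCode x = ratIndex q)) (m := ratCode q)
    (by simpa using ⟨isRatCode_ratCode q, (ratIndex_eq_count q).symm⟩)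
  have hs := Nat.rfind_spec hx
  simp only [PFun.coe_val, Part.mem_some_iff, true_eq_decide_iff] at hs
  rwa [Nat.count_injective hs.1 (isRatCode_ratCode q)
    (hs.2.trans (ratIndex_eq_count q))] at hx

theorem computable_ratDen : Computable Rat.den :=
  (Computable.snd.comp (Computable.unpair.comp computable_ratCode)).of_eq
    fun q => by simp [ratCode]

theorem computable_ratNum_toNat : Computable fun q : ℚ => q.num.toNat := by
  have h : Primrec fun n : ℕ => if n % 2 = 0 then n / 2 else 0 :=
    Primrec.ite (Primrec.eq.comp (Primrec.nat_mod.comp Primrec.id (Primrec.const 2))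
      (Primrec.const 0)) (Primrec.nat_div.comp Primrec.id (Primrec.const 2)) (Primrec.const 0)
  refine (h.to_comp.comp
    (Computable.fst.comp (Computable.unpair.comp computable_ratCode))).of_eq fun q => ?_
  simp only [ratCode, Nat.unpair_pair, toNat_eq_encode]

theorem computable_of_ratCode {α : Type*} [Primcodable α] {f : α → ℚ}
    (hf : Computable fun a => ratCode (f a)) : Computable f :=
  Computable.encode_iff.1 <| (primrecPred_isRatCode.nat_count.to_comp.comp hf).of_eq
    fun a => (ratIndex_eq_count (f a)).symm

theorem Computable.natCast_div {α : Type*} [Primcodable α] {f g : α → ℕ} (hf : Computable f)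
    (hg : Computable g) (h0 : ∀ a, 0 < g a) (hfg : ∀ a, (f a).Coprime (g a)) :
    Computable fun a => (f a / g a : ℚ) := by
  refine computable_of_ratCode <| ((Primrec₂.natPair.to_comp).comp
    ((Primrec.nat_mul.to_comp).comp (Computable.const 2) hf) hg).of_eq fun a => ?_
  have hb : (0 : ℤ) < g a := mod_cast h0 a
  have hn := Rat.num_div_eq_of_coprime (a := f a) hb (hfg a)
  have hd := Rat.den_div_eq_of_coprime (a := f a) hb (hfg a)
  push_cast at hn hd
  rw [ratCode, hn, encode_intCast, Nat.cast_inj.1 hd]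

/-- Comparison of the positive part of a rational number with a fraction. -/
theorem toNat_num_mul_lt_iff (q : ℚ) (a b : ℕ) (hb : 0 < b) :
    q.num.toNat * b < a * q.den ↔ max q 0 < a / b := by
  have hd : (0 : ℚ) < q.den := mod_cast q.den_pos
  have hb' : (0 : ℚ) < b := mod_cast hb
  have h : (q.num.toNat : ℚ) = max q 0 * q.den := by
    rw [max_mul_of_nonneg _ _ hd.le, Rat.mul_den_eq_num, zero_mul]
    exact_mod_cast Int.toNat_eq_max q.num
  rw [lt_div_iff₀ hb', ← mul_lt_mul_iff_left₀ hd, ← Nat.cast_lt (α := ℚ)]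
  push_cast
  rw [h, mul_right_comm]

theorem Primrec.nat_pow : Primrec₂ ((· ^ ·) : ℕ → ℕ → ℕ) :=
  Primrec₂.unpaired'.1 Nat.Primrec.pow

theorem Primrec₂.sum_range {f : ℕ → ℕ → ℕ} (hf : Primrec₂ f) :
    Primrec fun n => ∑ c ∈ range n, f n c := by
  have h : Primrec₂ fun (n : ℕ) (p : ℕ × ℕ) => p.2 + f n p.1 :=
    Primrec.nat_add.comp (Primrec.snd.comp Primrec.snd)
      (hf.comp Primrec.fst (Primrec.fst.comp Primrec.snd))
  refine (Primrec.nat_rec' Primrec.id (Primrec.const 0) h).of_eq fun n => ?_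
  have (m : ℕ) : (Nat.rec 0 (fun c s => s + f n c) m : ℕ) = ∑ c ∈ range m, f n c := by
    induction m with
    | zero => rfl
    | succ m ih => rw [sum_range_succ, ← ih]
  exact this n

/-! ### The Specker sequence of an enumeration by stages -/

/-- The numbers enumerated before stage `n`, where `H n c` says that `c` is found at stage `n`. -/
def enumStage (H : ℕ → ℕ → Bool) (n : ℕ) : Finset ℕ := {c ∈ range n | H n c}

/-- The numerator of `speckerSeq H n`. -/
def speckerNum (H : ℕ → ℕ → Bool) (n : ℕ) : ℕ :=
  2 * (2 ^ n + ∑ c ∈ range n, if H n c then 2 ^ (n - 1 - c) else 0) - 1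

/-- The Specker sequence of an enumeration by stages. -/
def speckerSeq (H : ℕ → ℕ → Bool) (n : ℕ) : ℚ := (speckerNum H n : ℚ) / (2 ^ (n + 2) : ℕ)

section Specker

variable {H : ℕ → ℕ → Bool}

theorem enumStage_mono (hH : ∀ c, Monotone (H · c)) : Monotone (enumStage H) := by
  intro m n hmn c hc
  simp only [enumStage, mem_filter, mem_range] at hc ⊢
  exact ⟨hc.1.trans_le hmn, hH c hmn hc.2⟩

theorem speckerSeq_eq (n : ℕ) :
    speckerSeq H n = 1 / 2 + ∑ c ∈ enumStage H n, (1 / 2 : ℚ) ^ (c + 2) - (1 / 2) ^ (n + 2) := by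
  have h1 : 1 ≤ 2 * (2 ^ n + ∑ c ∈ range n, if H n c then 2 ^ (n - 1 - c) else 0) := by
    have := Nat.one_le_two_pow (n := n)
    omega
  have h2 : ∑ c ∈ enumStage H n, (1 / 2 : ℚ) ^ (c + 2) =
      (∑ c ∈ range n, if H n c then (2 : ℚ) ^ (n - 1 - c) else 0) / 2 ^ (n + 1) := by
    rw [enumStage, sum_filter, sum_div]
    refine sum_congr rfl fun c hc => ?_
    split_ifs with h
    · have hn : n + 1 = (n - 1 - c) + (c + 2) := by have := mem_range.1 hc; omega
      rw [hn, pow_add 2 (n - 1 - c), div_mul_cancel_left₀ (by positivity), one_div, inv_pow]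
    · simp
  rw [speckerSeq, speckerNum, h2]
  push_cast [Nat.cast_sub h1]
  simp only [pow_succ, one_div, inv_pow]
  field_simp

theorem speckerSeq_add_le (hH : ∀ c, Monotone (H · c)) {m n c : ℕ} (hmn : m ≤ n)
    (hn : c ∈ enumStage H n) (hm : c ∉ enumStage H m) :
    speckerSeq H m + (1 / 2) ^ (c + 2) ≤ speckerSeq H n := by
  have h1 : ∑ c ∈ insert c (enumStage H m), (1 / 2 : ℚ) ^ (c + 2) ≤
      ∑ c ∈ enumStage H n, (1 / 2 : ℚ) ^ (c + 2) :=
    sum_le_sum_of_subset_of_nonneg (insert_subset hn (enumStage_mono hH hmn))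
      fun _ _ _ => by positivity
  have h2 : (1 / 2 : ℚ) ^ (n + 2) ≤ (1 / 2) ^ (m + 2) :=
    pow_le_pow_of_le_one (by norm_num) (by norm_num) (by omega)
  rw [sum_insert hm] at h1
  rw [speckerSeq_eq, speckerSeq_eq]
  linarith

theorem speckerSeq_strictMono (hH : ∀ c, Monotone (H · c)) : StrictMono (speckerSeq H) := by
  intro m n hmn
  have h1 : ∑ c ∈ enumStage H m, (1 / 2 : ℚ) ^ (c + 2) ≤
      ∑ c ∈ enumStage H n, (1 / 2 : ℚ) ^ (c + 2) :=
    sum_le_sum_of_subset_of_nonneg (enumStage_mono hH hmn.le) fun _ _ _ => by positivity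
  have h2 : (1 / 2 : ℚ) ^ (n + 2) < (1 / 2) ^ (m + 2) :=
    pow_lt_pow_right_of_lt_one₀ (by norm_num) (by norm_num) (by omega)
  rw [speckerSeq_eq, speckerSeq_eq]
  linarith

theorem speckerSeq_nonneg (n : ℕ) : 0 ≤ speckerSeq H n := by
  unfold speckerSeq; positivity

theorem speckerSeq_le_one (n : ℕ) : speckerSeq H n ≤ 1 := by
  have h1 : ∑ c ∈ enumStage H n, (1 / 2 : ℚ) ^ (c + 2) ≤ ∑ c ∈ range n, (1 / 2 : ℚ) ^ (c + 2) :=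
    sum_le_sum_of_subset_of_nonneg (filter_subset _ _) fun _ _ _ => by positivity
  have h2 : ∑ c ∈ range n, (1 / 2 : ℚ) ^ (c + 2) = 1 / 2 - (1 / 2) ^ (n + 1) := by
    clear h1
    induction n with
    | zero => norm_num
    | succ n ih => rw [sum_range_succ, ih]; ring
  have h3 : (0 : ℚ) < (1 / 2) ^ (n + 1) := by positivity
  have h4 : (0 : ℚ) < (1 / 2) ^ (n + 2) := by positivity
  rw [speckerSeq_eq]
  linarith

theorem primrec_speckerNum (hH : Primrec₂ H) : Primrec (speckerNum H) := by
  have hpow {α : Type} [Primcodable α] {f : α → ℕ} (hf : Primrec f) :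
      Primrec fun a => 2 ^ f a := Primrec.nat_pow.comp (Primrec.const 2) hf
  have hterm : Primrec₂ fun n c : ℕ => if H n c then 2 ^ (n - 1 - c) else 0 :=
    Primrec.ite (Primrec.eq.comp hH (Primrec.const true))
      (hpow (Primrec.nat_sub.comp (Primrec.nat_sub.comp Primrec.fst (Primrec.const 1))
        Primrec.snd)) (Primrec.const 0)
  exact Primrec.nat_sub.comp (Primrec.nat_mul.comp (Primrec.const 2)
    (Primrec.nat_add.comp (hpow Primrec.id) hterm.sum_range)) (Primrec.const 1)

theorem computable_speckerSeq (hH : Primrec₂ H) : Computable (speckerSeq H) := by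
  refine (primrec_speckerNum hH).to_comp.natCast_div
    (Primrec.nat_pow.comp (Primrec.const 2) (Primrec.nat_add.comp Primrec.id
      (Primrec.const 2))).to_comp (fun n => by positivity) fun n => ?_
  refine Nat.Coprime.pow_right _ (Nat.coprime_two_right.2 ?_)
  rw [Nat.odd_iff, speckerNum]
  have := Nat.one_le_two_pow (n := n)
  omega

/-- Stage `n` is close enough to the limit, approximated by `q`, to settle whether `c` is ever
enumerated, and `c` has not been enumerated by then. -/
def refutes (H : ℕ → ℕ → Bool) (q : ℕ → ℚ) (c n : ℕ) : Prop :=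
  c ∉ enumStage H n ∧ max (q (c + 5)) 0 < speckerSeq H n + (1 / 2) ^ (c + 4)

theorem exists_computable_refutes (hH : Primrec₂ H) {q : ℕ → ℚ} (hq : Computable q) :
    ∃ f : ℕ → ℕ → Bool, Computable₂ f ∧ ∀ c n, f c n = true ↔ refutes H q c n := by
  have hpow {f : ℕ × ℕ → ℕ} (hf : Primrec f) : Primrec fun p => 2 ^ f p :=
    Primrec.nat_pow.comp (Primrec.const 2) hf
  have hstage : PrimrecPred fun p : ℕ × ℕ => ¬ (p.1 < p.2 ∧ H p.2 p.1 = true) :=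
    ((Primrec.nat_lt.comp Primrec.fst Primrec.snd).and
      (Primrec.eq.comp (hH.comp Primrec.snd Primrec.fst) (Primrec.const true))).not
  have hb1 : Primrec fun p : ℕ × ℕ => 2 ^ (p.2 + 2) :=
    hpow (Primrec.nat_add.comp Primrec.snd (Primrec.const 2))
  have hb2 : Primrec fun p : ℕ × ℕ => 2 ^ (p.1 + 4) :=
    hpow (Primrec.nat_add.comp Primrec.fst (Primrec.const 4))
  have ha : Primrec fun p : ℕ × ℕ => speckerNum H p.2 * 2 ^ (p.1 + 4) + 2 ^ (p.2 + 2) :=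
    Primrec.nat_add.comp
      (Primrec.nat_mul.comp ((primrec_speckerNum hH).comp Primrec.snd) hb2) hb1
  have hq' : Computable fun p : ℕ × ℕ => q (p.1 + 5) :=
    hq.comp (Primrec.nat_add.comp Primrec.fst (Primrec.const 5)).to_comp
  have hlt : Computable fun p : ℕ × ℕ => decide ((q (p.1 + 5)).num.toNat *
      (2 ^ (p.2 + 2) * 2 ^ (p.1 + 4)) <
      (speckerNum H p.2 * 2 ^ (p.1 + 4) + 2 ^ (p.2 + 2)) * (q (p.1 + 5)).den) :=
    Primrec.nat_lt.decide.to_comp.comp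
      (Primrec.nat_mul.to_comp.comp (computable_ratNum_toNat.comp hq')
        (Primrec.nat_mul.comp hb1 hb2).to_comp)
      (Primrec.nat_mul.to_comp.comp ha.to_comp (computable_ratDen.comp hq'))
  refine ⟨_, (Primrec.and.to_comp.comp hstage.decide.to_comp hlt).to₂, fun c n => ?_⟩
  rw [Bool.and_eq_true, decide_eq_true_iff, decide_eq_true_iff,
    toNat_num_mul_lt_iff _ _ _ (by positivity), refutes, enumStage, mem_filter, mem_range]
  have : ((speckerNum H n * 2 ^ (c + 4) + 2 ^ (n + 2) : ℕ) : ℚ) /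
      (2 ^ (n + 2) * 2 ^ (c + 4) : ℕ) = speckerSeq H n + (1 / 2) ^ (c + 4) := by
    rw [speckerSeq, one_div, inv_pow]
    push_cast
    field_simp
  rw [this]

theorem exists_refutes_iff (hH : ∀ c, Monotone (H · c)) {q : ℕ → ℚ}
    (hq : ∀ n : ℕ, |(q n : ℝ) - ⨆ m, (speckerSeq H m : ℝ)| ≤ 2 ^ (-(n : ℤ))) (c : ℕ) :
    (∃ n, refutes H q c n) ↔ ∀ n, H n c = false := by
  have hbdd : BddAbove (Set.range fun m => (speckerSeq H m : ℝ)) :=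
    ⟨1, Set.forall_mem_range.2 fun m => mod_cast speckerSeq_le_one m⟩
  have hqc := abs_le.1 (hq (c + 5))
  rw [zpow_neg, zpow_natCast, ← inv_pow, ← one_div] at hqc
  set L := ⨆ m, (speckerSeq H m : ℝ)
  have hpos : (0 : ℝ) < (1 / 2) ^ (c + 5) := by positivity
  have h4 : (1 / 2 : ℝ) ^ (c + 4) = 2 * (1 / 2) ^ (c + 5) := by ring
  have h2 : (1 / 2 : ℝ) ^ (c + 2) = 8 * (1 / 2) ^ (c + 5) := by ring
  constructor
  · rintro ⟨n, hcn, hn⟩ k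
    by_contra hk
    rw [Bool.not_eq_false] at hk
    set m := max (max n k) (c + 1)
    have hm : c ∈ enumStage H m := by
      rw [enumStage, mem_filter, mem_range]
      exact ⟨by omega, hH c (show k ≤ m by omega) hk⟩
    have hgap : (speckerSeq H n : ℝ) + (1 / 2) ^ (c + 2) ≤ speckerSeq H m := by
      have := (Rat.cast_le (K := ℝ)).2 (speckerSeq_add_le hH (show n ≤ m by omega) hm hcn)
      push_cast at this
      exact this
    have hL : (speckerSeq H m : ℝ) ≤ L := le_ciSup hbdd m
    have hn' : (q (c + 5) : ℝ) < speckerSeq H n + (1 / 2) ^ (c + 4) := by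
      have := (Rat.cast_lt (K := ℝ)).2 ((le_max_left _ _).trans_lt hn)
      push_cast at this
      exact this
    linarith [hqc.1]
  · intro h
    obtain ⟨n, hn⟩ := exists_lt_of_lt_ciSup (show L - (1 / 2) ^ (c + 5) < L by linarith)
    refine ⟨n, by simp [enumStage, h], max_lt ?_ ?_⟩
    · have : (q (c + 5) : ℝ) < speckerSeq H n + (1 / 2) ^ (c + 4) := by linarith [hqc.2]
      rw [← Rat.cast_lt (K := ℝ)]
      push_cast
      exact this
    · have := speckerSeq_nonneg (H := H) n
      positivity

theorem rePred_compl_of_approx (hH : Primrec₂ H) (hmono : ∀ c, Monotone (H · c)) {q : ℕ → ℚ}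
    (hq : Computable q)
    (hL : ∀ n : ℕ, |(q n : ℝ) - ⨆ m, (speckerSeq H m : ℝ)| ≤ 2 ^ (-(n : ℤ))) :
    REPred fun c => ∀ n, H n c = false := by
  obtain ⟨f, hf, hfr⟩ := exists_computable_refutes hH hq
  refine (Partrec.rfind hf.partrec₂).dom_re.of_eq fun c => ?_
  rw [← exists_refutes_iff hmono hL]
  simp only [← hfr]
  exact ⟨fun h => ⟨_, (Part.mem_some_iff.1 (Nat.rfind_spec (Part.get_mem h))).symm⟩,
    fun ⟨n, hn⟩ => (Nat.rfind_min' hn).choose_spec.1.1⟩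

end Specker

/-- Membership in the halting set by stages. -/
def haltsWithin (n c : ℕ) : Bool :=
  (Nat.Partrec.Code.evaln n (Denumerable.ofNat Nat.Partrec.Code c) 0).isSome

theorem primrec_haltsWithin : Primrec₂ haltsWithin :=
  Primrec.option_isSome.comp (Nat.Partrec.Code.primrec_evaln.comp
    ((Primrec.fst.pair ((Primrec.ofNat _).comp Primrec.snd)).pair (Primrec.const 0)))

theorem haltsWithin_mono (c : ℕ) : Monotone (haltsWithin · c) := by
  refine fun m n hmn h => ?_
  obtain ⟨x, hx⟩ := Option.isSome_iff_exists.1 h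
  exact Option.isSome_iff_exists.2 ⟨x, Nat.Partrec.Code.evaln_mono hmn hx⟩

theorem forall_haltsWithin_eq_false (c : Nat.Partrec.Code) :
    (∀ n, haltsWithin n (encode c) = false) ↔ ¬ (c.eval 0).Dom := by
  rw [Part.dom_iff_mem]
  simp only [Nat.Partrec.Code.evaln_complete, haltsWithin, Denumerable.ofNat_encode]
  rw [exists_comm]
  simp only [← Bool.not_eq_true, Option.isSome_iff_exists, not_exists, Option.mem_def]


/-- Specker's theorem: there is a computable, strictly increasing sequence of rationals in
`[0,1]` whose supremum (as a real number) cannot be approximated to precision `2^(-n)` by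
any computable sequence of rationals. -/
theorem exists_specker_sequence :
    ∃ s : ℕ → ℚ, Computable s ∧ StrictMono s ∧ (∀ n, 0 ≤ s n ∧ s n ≤ 1) ∧
      ∀ q : ℕ → ℚ, Computable q →
        ¬ ∀ n : ℕ, |(q n : ℝ) - (⨆ m, ((s m : ℝ)))| ≤ 2 ^ (-(n : ℤ)) := by
  have hmono := haltsWithin_mono
  refine ⟨speckerSeq haltsWithin, computable_speckerSeq primrec_haltsWithin,
    speckerSeq_strictMono hmono, fun n => ⟨speckerSeq_nonneg n, speckerSeq_le_one n⟩,
    fun q hq hL => ComputablePred.halting_problem_not_re 0 ?_⟩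
  have h := rePred_compl_of_approx primrec_haltsWithin hmono hq hL
  have h' : REPred fun c : Nat.Partrec.Code => ∀ n, haltsWithin n (encode c) = false :=
    Partrec.comp h Computable.encode
  exact h'.of_eq forall_haltsWithin_eq_false
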